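/- arXiv:2205.13794 — 4 statements merged into one kernel-verified Lean document; each statement's English description precedes it below -/
import Mathlib

section
/- Let R be a commutative ring and {M_i}_{i∈I} a family of R-modules satisfying Hom_R(M_i, M_j) = 0 for all i ≠ j, and let M = ⊕_{i∈I} M_i. Then M is weakly-morphic if and only if M_i is weakly-morphic for every i ∈ I. -/
/-- `M` is `a`-morphic if `M/aM ≅ Ann_M(a)` as `R`-modules, where `aM` is the image and
`Ann_M(a)` the kernel of the multiplication-by-`a` endomorphism of `M`. -/
def IsAMorphic (R : Type*) [CommRing R] (M : Type*) [AddCommGroup M] [Module R M] (a : R) : Prop :=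
  Nonempty ((M ⧸ LinearMap.range (LinearMap.lsmul R M a)) ≃ₗ[R]
    LinearMap.ker (LinearMap.lsmul R M a))

/-- `M` is weakly-morphic if it is `a`-morphic for every `a ∈ R`. -/
def IsWeaklyMorphic (R : Type*) [CommRing R] (M : Type*) [AddCommGroup M] [Module R M] : Prop :=
  ∀ a : R, IsAMorphic R M a

/-! An isomorphism `M ⧸ aM ≃ Ann_M(a)` amounts to an endomorphism `f` of `M` with `ker f = aM` and
`range f = Ann_M(a)`: the sequence `M → M → M → M` with maps `a`, `f`, `a` is exact. Exactness of a
direct sum of sequences is tested componentwise, so families of such endomorphisms glue.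
Conversely, when all maps between distinct summands vanish, every endomorphism of the direct sum
is diagonal and hence arises by this gluing. -/

open DirectSum Function

theorem nonempty_quotient_range_equiv_ker_iff_exists_exact {R M₁ M₂ M₃ M₄ : Type*} [Ring R]
    [AddCommGroup M₁] [AddCommGroup M₂] [AddCommGroup M₃] [AddCommGroup M₄]
    [Module R M₁] [Module R M₂] [Module R M₃] [Module R M₄]
    (φ : M₁ →ₗ[R] M₂) (ψ : M₃ →ₗ[R] M₄) :
    Nonempty ((M₂ ⧸ LinearMap.range φ) ≃ₗ[R] LinearMap.ker ψ) ↔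
      ∃ f : M₂ →ₗ[R] M₃, Exact φ f ∧ Exact f ψ := by
  simp only [LinearMap.exact_iff]
  constructor
  · rintro ⟨e⟩
    refine ⟨(LinearMap.ker ψ).subtype ∘ₗ e.toLinearMap ∘ₗ (LinearMap.range φ).mkQ, ?_, ?_⟩
    · rw [LinearMap.ker_comp_of_ker_eq_bot _ (Submodule.ker_subtype _),
        LinearMap.ker_comp_of_ker_eq_bot _ e.ker, Submodule.ker_mkQ]
    · rw [LinearMap.range_comp, LinearMap.range_comp, Submodule.range_mkQ, Submodule.map_top,
        LinearEquiv.range, Submodule.map_subtype_top]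
  · rintro ⟨f, hker, hrange⟩
    exact ⟨Submodule.quotEquivOfEq _ _ hker.symm ≪≫ₗ f.quotKerEquivRange ≪≫ₗ
      LinearEquiv.ofEq _ _ hrange.symm⟩

section DirectSum

variable {R I : Type*} [Semiring R] {M N P : I → Type*}
  [∀ i, AddCommMonoid (M i)] [∀ i, AddCommMonoid (N i)] [∀ i, AddCommMonoid (P i)]
  [∀ i, Module R (M i)] [∀ i, Module R (N i)] [∀ i, Module R (P i)]

theorem exact_lmap_iff (f : ∀ i, M i →ₗ[R] N i) (g : ∀ i, N i →ₗ[R] P i) :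
    Exact (lmap f) (lmap g) ↔ ∀ i, Exact (f i) (g i) := by
  classical
  have mem_ker (y : ⨁ i, N i) : lmap g y = 0 ↔ ∀ i, g i (y i) = 0 := DFinsupp.ext_iff
  have mem_range (y : ⨁ i, N i) : y ∈ Set.range (lmap f) ↔ ∀ i, y i ∈ Set.range (f i) := by
    simpa using SetLike.ext_iff.mp (range_lmap f) y
  refine ⟨fun h i y ↦ ?_, fun h y ↦ ?_⟩
  · constructor
    · intro hy
      have lof_mem_ker : lmap g (lof R I N i y) = 0 := by rw [lmap_lof, hy, map_zero]
      simpa using (mem_range _).mp ((h _).mp lof_mem_ker) i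
    · rintro ⟨x, rfl⟩
      have lmap_mem_ker := (h _).mpr ⟨lof R I M i x, rfl⟩
      simpa using (mem_ker _).mp lmap_mem_ker i
  · rw [mem_ker, mem_range]
    exact forall_congr' fun i ↦ h i (y i)

theorem surjective_lmap_of_hom_eq_zero
    (hhom : ∀ i j, i ≠ j → ∀ f : M i →ₗ[R] N j, f = 0) :
    Surjective (lmap : (∀ i, M i →ₗ[R] N i) → (⨁ i, M i) →ₗ[R] ⨁ i, N i) := by
  classical
  intro F
  refine ⟨fun i ↦ component R I N i ∘ₗ F ∘ₗ lof R I M i, ?_⟩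
  ext i x j
  by_cases hij : i = j
  · subst hij
    simp [apply_eq_component R]
  · have component_eq_zero : F (lof R I M i x) j = 0 :=
      DFunLike.congr_fun (hhom i j hij (component R I N j ∘ₗ F ∘ₗ lof R I M i)) x
    rw [LinearMap.comp_apply, LinearMap.comp_apply, lmap_lof, component_eq_zero]
    exact of_eq_of_ne i j _ (Ne.symm hij)

end DirectSum

section IsAMorphic

variable {R : Type*} [CommRing R] {a : R}

theorem isAMorphic_iff_exists_exact {M : Type*} [AddCommGroup M] [Module R M] :
    IsAMorphic R M a ↔ ∃ f : M →ₗ[R] M,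
      Exact (LinearMap.lsmul R M a) f ∧ Exact f (LinearMap.lsmul R M a) :=
  nonempty_quotient_range_equiv_ker_iff_exists_exact _ _

variable {I : Type*} {M : I → Type*} [∀ i, AddCommGroup (M i)] [∀ i, Module R (M i)]

theorem isAMorphic_directSum_iff
    (hhom : ∀ i j, i ≠ j → ∀ f : M i →ₗ[R] M j, f = 0) :
    IsAMorphic R (⨁ i, M i) a ↔ ∀ i, IsAMorphic R (M i) a := by
  have lsmul_eq_lmap : LinearMap.lsmul R (⨁ i, M i) a = lmap fun i ↦ LinearMap.lsmul R (M i) a :=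
    rfl
  simp only [isAMorphic_iff_exists_exact, (surjective_lmap_of_hom_eq_zero hhom).exists,
    lsmul_eq_lmap, exact_lmap_iff, ← forall_and, Classical.skolem]

end IsAMorphic

theorem stmt_7 (R : Type*) [CommRing R] (I : Type*) [DecidableEq I]
    (M : I → Type*) [∀ i, AddCommGroup (M i)] [∀ i, Module R (M i)]
    (hhom : ∀ i j, i ≠ j → ∀ f : M i →ₗ[R] M j, f = 0) :
    IsWeaklyMorphic R (DirectSum I M) ↔ ∀ i, IsWeaklyMorphic R (M i) := by
  simp only [IsWeaklyMorphic, isAMorphic_directSum_iff hhom]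
  exact forall_comm
end

section
/- Let R be a commutative ring and M an R-module whose endomorphism ring End_R(M) is von Neumann regular (for every φ ∈ End_R(M) there exists ψ ∈ End_R(M) with φ = φ ∘ ψ ∘ φ). Then M is weakly-morphic. -/
/-!
Multiplication by `a` is a central element `f` of `End_R(M)`. If `f = f ψ f`, then `f ψ` is an
idempotent with the range of `f` and `ψ f` has the kernel of `f`. Centrality gives `f ψ = ψ f`, so
`M = aM ⊕ Ann_M(a)`, and the complement `Ann_M(a)` of `aM` is isomorphic to `M/aM`.
-/

theorem isIdempotentElem_mul_of_mul_mul_self {S : Type*} [Semigroup S] {a b : S}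
    (h : a * b * a = a) : IsIdempotentElem (a * b) := by
  rw [IsIdempotentElem, ← mul_assoc, h]

section Semiring

variable {R M N : Type*} [Semiring R] [AddCommMonoid M] [AddCommMonoid N] [Module R M] [Module R N]
  {f : M →ₗ[R] N} {g : N →ₗ[R] M}

theorem range_comp_eq_of_comp_comp_self (h : f ∘ₗ g ∘ₗ f = f) :
    LinearMap.range (f ∘ₗ g) = LinearMap.range f := by
  refine le_antisymm (LinearMap.range_comp_le_range g f) ?_
  calc LinearMap.range f = LinearMap.range ((f ∘ₗ g) ∘ₗ f) := by rw [LinearMap.comp_assoc, h]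
    _ ≤ LinearMap.range (f ∘ₗ g) := LinearMap.range_comp_le_range f (f ∘ₗ g)

theorem ker_comp_eq_of_comp_comp_self (h : f ∘ₗ g ∘ₗ f = f) :
    LinearMap.ker (g ∘ₗ f) = LinearMap.ker f := by
  refine le_antisymm ?_ (LinearMap.ker_le_ker_comp f g)
  calc LinearMap.ker (g ∘ₗ f) ≤ LinearMap.ker (f ∘ₗ g ∘ₗ f) :=
        LinearMap.ker_le_ker_comp (g ∘ₗ f) f
    _ = LinearMap.ker f := by rw [h]

end Semiring

theorem isCompl_range_ker_of_commute_of_mul_mul_self {R M : Type*} [Ring R] [AddCommGroup M]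
    [Module R M] {f g : Module.End R M} (hcomm : Commute f g) (h : f * g * f = f) :
    IsCompl (LinearMap.range f) (LinearMap.ker f) := by
  have hrange : LinearMap.range (f * g) = LinearMap.range f := range_comp_eq_of_comp_comp_self h
  have hker : LinearMap.ker (f * g) = LinearMap.ker f := by
    rw [hcomm.eq]
    exact ker_comp_eq_of_comp_comp_self h
  rw [← hrange, ← hker]
  exact LinearMap.IsIdempotentElem.isCompl (isIdempotentElem_mul_of_mul_mul_self h)

theorem commute_lsmul {R M : Type*} [CommSemiring R] [AddCommMonoid M] [Module R M]
    (a : R) (g : Module.End R M) : Commute (LinearMap.lsmul R M a) g :=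
  LinearMap.ext fun m ↦ (g.map_smul a m).symm

theorem stmt_12_general {R M : Type*} [CommRing R] [AddCommGroup M] [Module R M] {a : R}
    (h : ∃ ψ : M →ₗ[R] M,
      LinearMap.lsmul R M a = LinearMap.lsmul R M a ∘ₗ ψ ∘ₗ LinearMap.lsmul R M a) :
    IsAMorphic R M a := by
  obtain ⟨ψ, hψ⟩ := h
  exact ⟨Submodule.quotientEquivOfIsCompl _ _
    (isCompl_range_ker_of_commute_of_mul_mul_self (commute_lsmul a ψ) hψ.symm)⟩

theorem stmt_12 (R : Type*) [CommRing R] (M : Type*) [AddCommGroup M] [Module R M]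
    (hreg : ∀ φ : M →ₗ[R] M, ∃ ψ : M →ₗ[R] M, φ = φ ∘ₗ ψ ∘ₗ φ) :
    IsWeaklyMorphic R M :=
  fun a ↦ stmt_12_general (hreg (LinearMap.lsmul R M a))
end

section
/- Let D be a Noetherian integral domain. Then the following are equivalent: (1) D is Artinian; (2) every torsion-free D-module is weakly-morphic; (3) every divisible D-module is weakly-morphic. -/
universe u

/-! For an `a`-morphic module, `M/aM` and `Ann_M(a)` vanish together, so multiplication by `a` is
surjective on `M` exactly when it is injective. If every torsion-free `D`-module is weakly-morphic,
apply this to `D` itself: for `a ≠ 0` multiplication by `a` on `D` is injective, hence surjective,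
hence `a` is a unit. If every divisible `D`-module is weakly-morphic, apply it to `K/D`, where `K`
is the fraction field: multiplication by `a` is surjective, hence injective, and it kills the
class of `a⁻¹`, hence `a⁻¹ ∈ D`. Either way `D` is a field, that is, an Artinian domain.
Conversely, every module is `0`-morphic and `a`-morphic for every unit `a`. -/

section Multiplication

variable {R : Type*} [CommRing R] {M : Type*} [AddCommGroup M] [Module R M] {a : R}

theorem range_lsmul_eq_top_of_isUnit_algebraMap {A : Type*} [Ring A] [Algebra R A] [Module A M]
    [IsScalarTower R A M] (ha : IsUnit (algebraMap R A a)) :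
    LinearMap.range (LinearMap.lsmul R M a) = ⊤ := by
  refine LinearMap.range_eq_top.mpr fun x => ?_
  obtain ⟨y, hy⟩ := ha.smul_bijective.surjective x
  exact ⟨y, (algebraMap_smul A a y).symm.trans hy⟩

theorem range_lsmul_quotient_eq_top (h : LinearMap.range (LinearMap.lsmul R M a) = ⊤)
    (N : Submodule R M) : LinearMap.range (LinearMap.lsmul R (M ⧸ N) a) = ⊤ := by
  refine LinearMap.range_eq_top.mpr (N.mkQ_surjective.forall.mpr fun x => ?_)
  obtain ⟨y, rfl⟩ := LinearMap.range_eq_top.mp h x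
  exact ⟨N.mkQ y, (N.mkQ.map_smul a y).symm⟩

theorem isUnit_of_isSMulRegular_quotient_one {A : Type*} [Ring A] [Algebra R A] [FaithfulSMul R A]
    (ha : IsUnit (algebraMap R A a)) (h : IsSMulRegular (A ⧸ (1 : Submodule R A)) a) :
    IsUnit a := by
  obtain ⟨c, hc⟩ := ha.exists_right_inv
  have smul_mem : a • c ∈ (1 : Submodule R A) := by
    rw [Algebra.smul_def, hc]
    exact Submodule.one_le.mp le_rfl
  obtain ⟨b, rfl⟩ := Submodule.mem_one.mp (mem_of_isSMulRegular_quotient_of_smul_mem h smul_mem)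
  refine .of_mul_eq_one b (FaithfulSMul.algebraMap_injective R A ?_)
  rw [map_mul, hc, map_one]

end Multiplication

section Morphic

variable {R : Type*} [CommRing R] {M : Type*} [AddCommGroup M] [Module R M] {a : R}

theorem isAMorphic_zero : IsAMorphic R M 0 :=
  have range_eq_bot : LinearMap.range (LinearMap.lsmul R M 0) = ⊥ := by simp
  have ker_eq_top : LinearMap.ker (LinearMap.lsmul R M 0) = ⊤ := by simp
  ⟨Submodule.quotEquivOfEqBot _ range_eq_bot ≪≫ₗ (LinearEquiv.ofTop _ ker_eq_top).symm⟩

theorem isAMorphic_of_isUnit (ha : IsUnit a) : IsAMorphic R M a := by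
  have : Subsingleton (M ⧸ LinearMap.range (LinearMap.lsmul R M a)) :=
    Submodule.Quotient.subsingleton_iff.mpr (range_lsmul_eq_top_of_isUnit_algebraMap (A := R) ha)
  have : Subsingleton (LinearMap.ker (LinearMap.lsmul R M a)) :=
    Submodule.subsingleton_iff_eq_bot.mpr
      ((isSMulRegular_iff_ker_lsmul_eq_bot M a).mp (ha.isSMulRegular M))
  exact ⟨0⟩

theorem isWeaklyMorphic_of_forall_isUnit (hR : ∀ r : R, r ≠ 0 → IsUnit r) :
    IsWeaklyMorphic R M := by
  intro r
  obtain rfl | hr := eq_or_ne r 0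
  · exact isAMorphic_zero
  · exact isAMorphic_of_isUnit (hR r hr)

theorem IsAMorphic.range_eq_top_iff_isSMulRegular (h : IsAMorphic R M a) :
    LinearMap.range (LinearMap.lsmul R M a) = ⊤ ↔ IsSMulRegular M a := by
  obtain ⟨e⟩ := h
  rw [isSMulRegular_iff_ker_lsmul_eq_bot, ← Submodule.Quotient.subsingleton_iff,
    ← Submodule.subsingleton_iff_eq_bot]
  exact e.toEquiv.subsingleton_congr

theorem IsAMorphic.isUnit_of_isSMulRegular (h : IsAMorphic R R a) (ha : IsSMulRegular R a) :
    IsUnit a := by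
  obtain ⟨b, hb⟩ : ∃ b, a * b = 1 :=
    LinearMap.range_eq_top.mp (h.range_eq_top_iff_isSMulRegular.mpr ha) 1
  exact .of_mul_eq_one b hb

theorem IsAMorphic.isUnit_of_isUnit_algebraMap {A : Type*} [Ring A] [Algebra R A]
    [FaithfulSMul R A] (h : IsAMorphic R (A ⧸ (1 : Submodule R A)) a)
    (ha : IsUnit (algebraMap R A a)) : IsUnit a :=
  have surjective_on_quotient :=
    range_lsmul_quotient_eq_top (range_lsmul_eq_top_of_isUnit_algebraMap ha) 1
  isUnit_of_isSMulRegular_quotient_one ha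
    (h.range_eq_top_iff_isSMulRegular.mp surjective_on_quotient)

end Morphic

theorem isArtinianRing_iff_forall_isUnit {D : Type*} [CommRing D] [IsDomain D] :
    IsArtinianRing D ↔ ∀ a : D, a ≠ 0 → IsUnit a := by
  constructor
  · intro _ a ha
    exact IsArtinianRing.isUnit_of_mem_nonZeroDivisors (mem_nonZeroDivisors_of_ne_zero ha)
  · intro h
    let : Field D := Field.ofIsUnitOrEqZero fun a => or_iff_not_imp_right.mpr (h a)
    infer_instance

theorem stmt_17_general (D : Type u) [CommRing D] [IsDomain D] :
    List.TFAE [IsArtinianRing D,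
      ∀ (M : Type u) [AddCommGroup M] [Module D M],
        (∀ (m : M) (a : D), a • m = 0 → m = 0 ∨ a = 0) → IsWeaklyMorphic D M,
      ∀ (M : Type u) [AddCommGroup M] [Module D M],
        (∀ a : D, a ≠ 0 → LinearMap.range (LinearMap.lsmul D M a) = ⊤) →
          IsWeaklyMorphic D M] := by
  have weaklyMorphic (h : IsArtinianRing D) (M : Type u) [AddCommGroup M] [Module D M] :
      IsWeaklyMorphic D M :=
    isWeaklyMorphic_of_forall_isUnit (isArtinianRing_iff_forall_isUnit.mp h)
  tfae_have 1 → 2 := fun h M _ _ _ => weaklyMorphic h M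
  tfae_have 1 → 3 := fun h M _ _ _ => weaklyMorphic h M
  tfae_have 2 → 1 := by
    intro h
    have torsionFree (m b : D) (hbm : b • m = 0) : m = 0 ∨ b = 0 := (mul_eq_zero.mp hbm).symm
    exact isArtinianRing_iff_forall_isUnit.mpr fun a ha =>
      (h D torsionFree a).isUnit_of_isSMulRegular (mul_right_injective₀ ha)
  tfae_have 3 → 1 := by
    intro h
    let K := FractionRing D
    have isUnit_map (b : D) (hb : b ≠ 0) : IsUnit (algebraMap D K b) :=
      IsLocalization.map_units K ⟨b, mem_nonZeroDivisors_of_ne_zero hb⟩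
    have divisible (b : D) (hb : b ≠ 0) :
        LinearMap.range (LinearMap.lsmul D (K ⧸ (1 : Submodule D K)) b) = ⊤ :=
      range_lsmul_quotient_eq_top (range_lsmul_eq_top_of_isUnit_algebraMap (isUnit_map b hb)) 1
    exact isArtinianRing_iff_forall_isUnit.mpr fun a ha =>
      (h _ divisible a).isUnit_of_isUnit_algebraMap (isUnit_map a ha)
  tfae_finish

theorem stmt_17 (D : Type u) [CommRing D] [IsDomain D] [IsNoetherianRing D] :
    List.TFAE [IsArtinianRing D,
      ∀ (M : Type u) [AddCommGroup M] [Module D M],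
        (∀ (m : M) (a : D), a • m = 0 → m = 0 ∨ a = 0) → IsWeaklyMorphic D M,
      ∀ (M : Type u) [AddCommGroup M] [Module D M],
        (∀ a : D, a ≠ 0 → LinearMap.range (LinearMap.lsmul D M a) = ⊤) →
          IsWeaklyMorphic D M] :=
  stmt_17_general D
end

section
/- A finitely generated ℤ-module M is weakly-morphic if and only if M is finite (as a set). -/
/-!
If a Noetherian module `M` is weakly-morphic, the ascending chain `Ann_M(aⁿ)` stabilizes, so
`M/aⁿM ≅ M/aⁿ⁺¹M` for some `n`. The canonical surjection between these Noetherian modules is then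
injective, that is, `aⁿM = aⁿ⁺¹M`, and Nakayama's lemma produces `r ≡ 1 mod a` with `r aⁿ M = 0`.
Over a domain, a nonzero nonunit `a` gives `r aⁿ ≠ 0`, so `M` is torsion.

Conversely, a finitely generated torsion module over a principal ideal domain is a direct sum of
modules `R/(d)` with `d ≠ 0`. On `R/(d)`, writing `d = gcd(a, d) c`, multiplication by `c` has
kernel `a(R/(d))` and image `Ann(a)`.
-/

open LinearMap Submodule
open scoped DirectSum

section Noetherian

variable {R : Type*} [CommRing R] {M : Type*} [AddCommGroup M] [Module R M]

theorem eq_of_le_of_quotient_linearEquiv {P Q : Submodule R M} [Module.Finite R (M ⧸ P)]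
    (hPQ : P ≤ Q) (e : (M ⧸ P) ≃ₗ[R] M ⧸ Q) : P = Q := by
  have factor_injective : Function.Injective (factor hPQ) := by
    have h := OrzechProperty.injective_of_surjective_endomorphism (e.symm.toLinearMap ∘ₗ factor hPQ)
      (e.symm.surjective.comp (factor_surjective hPQ))
    exact Function.Injective.of_comp (f := e.symm) h
  refine hPQ.antisymm fun x hx ↦ ?_
  rw [← Quotient.mk_eq_zero] at hx ⊢
  exact factor_injective (hx.trans (map_zero _).symm)

theorem lsmul_pow (a : R) (n : ℕ) : lsmul R M (a ^ n) = lsmul R M a ^ n :=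
  map_pow (Module.toModuleEnd R (S := R) M) a n

theorem IsWeaklyMorphic.exists_range_lsmul_pow_succ_eq [IsNoetherian R M]
    (h : IsWeaklyMorphic R M) (a : R) :
    ∃ n : ℕ, range (lsmul R M (a ^ (n + 1))) = range (lsmul R M (a ^ n)) := by
  obtain ⟨n, hn⟩ := monotone_stabilizes_iff_noetherian.mpr ‹_› (iterateKer (lsmul R M a))
  have ker_eq : ker (lsmul R M (a ^ (n + 1))) = ker (lsmul R M (a ^ n)) := by
    simpa only [lsmul_pow, iterateKer_coe] using (hn (n + 1) n.le_succ).symm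
  have range_le : range (lsmul R M (a ^ (n + 1))) ≤ range (lsmul R M (a ^ n)) := by
    rw [lsmul_pow, lsmul_pow, pow_succ]
    exact range_comp_le_range _ _
  obtain ⟨e₁⟩ := h (a ^ (n + 1))
  obtain ⟨e₀⟩ := h (a ^ n)
  exact ⟨n, eq_of_le_of_quotient_linearEquiv range_le
    (e₁ ≪≫ₗ LinearEquiv.ofEq _ _ ker_eq ≪≫ₗ e₀.symm)⟩

theorem IsWeaklyMorphic.exists_sub_one_mem_and_mul_pow_smul_eq_zero [IsNoetherian R M]
    (h : IsWeaklyMorphic R M) (a : R) :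
    ∃ (r : R) (n : ℕ), r - 1 ∈ Ideal.span {a} ∧ ∀ x : M, (r * a ^ n) • x = 0 := by
  obtain ⟨n, hn⟩ := h.exists_range_lsmul_pow_succ_eq a
  have range_le : range (lsmul R M (a ^ n)) ≤ Ideal.span {a} • range (lsmul R M (a ^ n)) := by
    nth_rw 1 [← hn]
    rintro _ ⟨x, rfl⟩
    rw [lsmul_apply, pow_succ', mul_smul]
    exact smul_mem_smul (Ideal.mem_span_singleton_self a) ⟨x, rfl⟩
  obtain ⟨r, hr, hr0⟩ := exists_sub_one_mem_and_smul_eq_zero_of_fg_of_le_smul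
    _ _ (IsNoetherian.noetherian _) range_le
  exact ⟨r, n, hr, fun x ↦ by rw [mul_smul]; exact hr0 _ ⟨x, rfl⟩⟩

theorem IsWeaklyMorphic.isTorsion [IsDomain R] [IsNoetherian R M] (hR : ¬IsField R)
    (h : IsWeaklyMorphic R M) : Module.IsTorsion R M := by
  obtain ⟨a, ha0, ha⟩ := Ring.exists_not_isUnit_of_not_isField hR
  obtain ⟨r, n, hr, hann⟩ := h.exists_sub_one_mem_and_mul_pow_smul_eq_zero a
  have hr0 : r ≠ 0 := by
    rintro rfl
    rw [zero_sub, neg_mem_iff, Ideal.mem_span_singleton] at hr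
    exact ha (isUnit_of_dvd_one hr)
  exact fun x ↦ ⟨⟨r * a ^ n, mem_nonZeroDivisors_of_ne_zero (mul_ne_zero hr0 (pow_ne_zero n ha0))⟩,
    hann x⟩

end Noetherian

section Torsion

variable {R : Type*} [CommRing R]

theorem isAMorphic_iff_exists_end {M : Type*} [AddCommGroup M] [Module R M] {a : R} :
    IsAMorphic R M a ↔
      ∃ f : Module.End R M, ker f = range (lsmul R M a) ∧ range f = ker (lsmul R M a) := by
  constructor
  · rintro ⟨e⟩
    refine ⟨(ker (lsmul R M a)).subtype ∘ₗ e.toLinearMap ∘ₗ (range (lsmul R M a)).mkQ, ?_, ?_⟩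
    · rw [ker_comp_of_ker_eq_bot _ (ker_subtype _), LinearEquiv.ker_comp, ker_mkQ]
    · rw [range_comp, range_comp_of_range_eq_top _ (range_mkQ _), LinearEquiv.range,
        map_subtype_top]
  · rintro ⟨f, hker, hrange⟩
    exact ⟨quotEquivOfEq _ _ hker.symm ≪≫ₗ f.quotKerEquivRange ≪≫ₗ LinearEquiv.ofEq _ _ hrange⟩

theorem IsAMorphic.of_linearEquiv {M N : Type*} [AddCommGroup M] [Module R M] [AddCommGroup N]
    [Module R N] {a : R} (h : IsAMorphic R M a) (e : M ≃ₗ[R] N) : IsAMorphic R N a := by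
  have comm : e.toLinearMap ∘ₗ lsmul R M a = lsmul R N a ∘ₗ e.toLinearMap :=
    LinearMap.ext (map_smul e a)
  have map_range : (range (lsmul R M a)).map e.toLinearMap = range (lsmul R N a) := by
    rw [← range_comp, comm, LinearEquiv.range_comp]
  have map_ker : (ker (lsmul R M a)).map e.toLinearMap = ker (lsmul R N a) := by
    rw [← LinearEquiv.ker_comp e, comm, ker_comp, map_comap_eq_of_surjective e.surjective]
  obtain ⟨e'⟩ := h
  exact ⟨(Quotient.equiv _ _ e map_range).symm ≪≫ₗ e' ≪≫ₗ e.submoduleMap _ ≪≫ₗ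
    LinearEquiv.ofEq _ _ map_ker⟩

theorem IsAMorphic.directSum {ι : Type*} {M : ι → Type*} [∀ i, AddCommGroup (M i)]
    [∀ i, Module R (M i)] {a : R} (h : ∀ i, IsAMorphic R (M i) a) : IsAMorphic R (⨁ i, M i) a := by
  simp only [isAMorphic_iff_exists_end] at h ⊢
  choose f hker hrange using h
  have lsmul_eq : lsmul R (⨁ i, M i) a = DirectSum.lmap fun i ↦ lsmul R (M i) a := by
    ext x i
    exact DirectSum.smul_apply a x i
  refine ⟨DirectSum.lmap f, ?_, ?_⟩
  · simp only [lsmul_eq, DirectSum.ker_lmap, DirectSum.range_lmap, hker]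
  · simp only [lsmul_eq, DirectSum.ker_lmap, DirectSum.range_lmap, hrange]

theorem isAMorphic_gcd_iff [IsBezout R] {M : Type*} [AddCommGroup M] [Module R M] {a d : R}
    (hd : Module.IsTorsionBy R M d) : IsAMorphic R M (IsBezout.gcd a d) ↔ IsAMorphic R M a := by
  obtain ⟨u, hu⟩ := IsBezout.gcd_dvd_left a d
  obtain ⟨x, y, hxy⟩ := IsBezout.gcd_eq_sum a d
  have smul_gcd (m : M) : IsBezout.gcd a d • m = x • a • m := by
    rw [← hxy, add_smul, mul_smul, mul_smul, hd, smul_zero, add_zero]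
  have smul_a (m : M) : a • m = u • IsBezout.gcd a d • m := by
    rw [smul_smul, mul_comm, ← hu]
  have ker_eq : ker (lsmul R M (IsBezout.gcd a d)) = ker (lsmul R M a) := by
    ext m
    simp only [mem_ker, lsmul_apply]
    exact ⟨fun h ↦ by rw [smul_a, h, smul_zero], fun h ↦ by rw [smul_gcd, h, smul_zero]⟩
  have range_eq : range (lsmul R M (IsBezout.gcd a d)) = range (lsmul R M a) := by
    apply le_antisymm
    · rintro _ ⟨m, rfl⟩
      exact ⟨x • m, by rw [lsmul_apply, lsmul_apply, smul_gcd, smul_comm]⟩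
    · rintro _ ⟨m, rfl⟩
      exact ⟨u • m, by rw [lsmul_apply, lsmul_apply, smul_a, smul_comm]⟩
  rw [IsAMorphic, IsAMorphic, ker_eq, range_eq]

theorem ker_lsmul_quotient_span_mul [IsDomain R] {b c : R} (hc : c ≠ 0) :
    ker (lsmul R (R ⧸ Ideal.span {b * c}) c) = range (lsmul R (R ⧸ Ideal.span {b * c}) b) := by
  apply le_antisymm
  · intro m hm
    obtain ⟨z, rfl⟩ := Ideal.Quotient.mk_surjective m
    have dvd : c * b ∣ c * z := by
      rw [mul_comm c b]
      exact Ideal.mem_span_singleton.mp (Ideal.Quotient.eq_zero_iff_mem.mp hm)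
    obtain ⟨w, rfl⟩ := (mul_dvd_mul_iff_left hc).mp dvd
    exact ⟨Ideal.Quotient.mk _ w, rfl⟩
  · rintro _ ⟨m, rfl⟩
    obtain ⟨w, rfl⟩ := Ideal.Quotient.mk_surjective m
    refine Ideal.Quotient.eq_zero_iff_mem.mpr (Ideal.mem_span_singleton.mpr ⟨w, ?_⟩)
    simp only [smul_eq_mul]
    ring

theorem isAMorphic_quotient_span_singleton_of_dvd [IsDomain R] {b d : R} (hd : d ≠ 0)
    (hb : b ∣ d) : IsAMorphic R (R ⧸ Ideal.span {d}) b := by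
  obtain ⟨c, rfl⟩ := hb
  refine isAMorphic_iff_exists_end.mpr ⟨lsmul R _ c, ?_, ?_⟩
  · exact ker_lsmul_quotient_span_mul (right_ne_zero_of_mul hd)
  · rw [mul_comm b c]
    exact (ker_lsmul_quotient_span_mul (left_ne_zero_of_mul hd)).symm

theorem isWeaklyMorphic_quotient_span_singleton [IsDomain R] [IsBezout R] {d : R} (hd : d ≠ 0) :
    IsWeaklyMorphic R (R ⧸ Ideal.span {d}) := fun a ↦
  have torsionBy : Module.IsTorsionBy R (R ⧸ Ideal.span {d}) d :=
    (Module.isTorsionBy_quotient_iff _ _).mpr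
      fun x ↦ Ideal.mul_mem_right x _ (Ideal.mem_span_singleton_self d)
  (isAMorphic_gcd_iff torsionBy).mp
    (isAMorphic_quotient_span_singleton_of_dvd hd (IsBezout.gcd_dvd_right a d))

theorem isWeaklyMorphic_of_isTorsion [IsDomain R] [IsPrincipalIdealRing R] {M : Type*}
    [AddCommGroup M] [Module R M] [Module.Finite R M] (hM : Module.IsTorsion R M) :
    IsWeaklyMorphic R M := by
  obtain ⟨ι, _, p, hp, k, ⟨e⟩⟩ := Module.equiv_directSum_of_isTorsion hM
  have cyclic (i : ι) : IsWeaklyMorphic R (R ⧸ Ideal.span {p i ^ k i}) :=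
    isWeaklyMorphic_quotient_span_singleton (pow_ne_zero _ (hp i).ne_zero)
  exact fun a ↦ (IsAMorphic.directSum fun i ↦ cyclic i a).of_linearEquiv e.symm

end Torsion

theorem stmt_18_general {R : Type*} [CommRing R] [IsDomain R] [IsPrincipalIdealRing R]
    (hR : ¬IsField R) (M : Type*) [AddCommGroup M] [Module R M] [Module.Finite R M] :
    IsWeaklyMorphic R M ↔ Module.IsTorsion R M :=
  ⟨IsWeaklyMorphic.isTorsion hR, isWeaklyMorphic_of_isTorsion⟩

theorem finite_iff_isTorsion_int (M : Type*) [AddCommGroup M] [Module ℤ M] [Module.Finite ℤ M] :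
    Finite M ↔ Module.IsTorsion ℤ M := by
  refine ⟨fun _ x ↦ ?_, Module.finite_of_fg_torsion M⟩
  have card_ne_zero : (Nat.card M : ℤ) ≠ 0 := Nat.cast_ne_zero.mpr Nat.card_pos.ne'
  exact ⟨⟨Nat.card M, mem_nonZeroDivisors_of_ne_zero card_ne_zero⟩,
    (Nat.cast_smul_eq_nsmul ℤ (Nat.card M) x).trans card_nsmul_eq_zero'⟩

theorem stmt_18 (M : Type*) [AddCommGroup M] [Module ℤ M] [Module.Finite ℤ M] :
    IsWeaklyMorphic ℤ M ↔ Finite M := by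
  exact (stmt_18_general Int.not_isField M).trans (finite_iff_isTorsion_int M).symm
end
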